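/- Let k be a positive integer and let C be a self-dual Z4-code of length 24k+8 whose minimum Lee weight d_L(C) equals 8k+8 or 8k+6. Then the residue code C^(1) is a binary extremal doubly even self-dual code of length 24k+8, i.e., C^(1) equals its own dual, every codeword of C^(1) has Hamming weight divisible by 4, and the minimum Hamming weight of C^(1) is 4k+4. -/

import Mathlib

open Finset

namespace Z4Note

variable {ι : Type*} [Fintype ι]

/-- Hamming weight of a binary vector. -/
def hWt (x : ι → ZMod 2) : ℕ := (Finset.univ.filter fun i => x i ≠ 0).card

/-- Lee value of an element of `ZMod 4`:  0 ↦ 0, 1 ↦ 1, 2 ↦ 2, 3 ↦ 1. -/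
def leeVal (a : ZMod 4) : ℕ := min a.val (4 - a.val)

/-- Lee weight `n₁(x) + 2 n₂(x) + n₃(x)`. -/
def leeWt (x : ι → ZMod 4) : ℕ := ∑ i, leeVal (x i)

/-- Euclidean weight `n₁(x) + 4 n₂(x) + n₃(x)`. -/
def eucWt (x : ι → ZMod 4) : ℕ := ∑ i, (leeVal (x i)) ^ 2

/-- Number of coordinates of `x` equal to `a`. -/
def nCount (a : ZMod 4) (x : ι → ZMod 4) : ℕ := (Finset.univ.filter fun i => x i = a).card

/-- Dual of a `ZMod 4`-code (as a set), w.r.t. the standard inner product. -/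
def dualZ4 (C : Set (ι → ZMod 4)) : Set (ι → ZMod 4) :=
  {x | ∀ y ∈ C, ∑ i, x i * y i = 0}

/-- Dual of a binary code (as a set), w.r.t. the standard inner product. -/
def dual2 (C : Set (ι → ZMod 2)) : Set (ι → ZMod 2) :=
  {x | ∀ y ∈ C, ∑ i, x i * y i = 0}

/-- A `ZMod 4`-code is self-dual if it equals its dual. -/
def SelfDualZ4 (C : Submodule (ZMod 4) (ι → ZMod 4)) : Prop :=
  (C : Set (ι → ZMod 4)) = dualZ4 (C : Set (ι → ZMod 4))

/-- A binary code is self-dual if it equals its dual. -/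
def SelfDual2 (D : Submodule (ZMod 2) (ι → ZMod 2)) : Prop :=
  (D : Set (ι → ZMod 2)) = dual2 (D : Set (ι → ZMod 2))

/-- Coordinatewise reduction modulo 2. -/
def res2 (x : ι → ZMod 4) : ι → ZMod 2 :=
  fun i => ZMod.castHom (by norm_num : (2:ℕ) ∣ 4) (ZMod 2) (x i)

/-- The residue code `C⁽¹⁾ = {c mod 2 : c ∈ C}`. -/
def residue (C : Set (ι → ZMod 4)) : Set (ι → ZMod 2) := res2 '' C

/-- Minimum Lee weight among nonzero codewords. -/
noncomputable def minLee (C : Set (ι → ZMod 4)) : ℕ := sInf {d | ∃ x ∈ C, x ≠ 0 ∧ leeWt x = d}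

/-- Minimum Euclidean weight among nonzero codewords. -/
noncomputable def minEuc (C : Set (ι → ZMod 4)) : ℕ := sInf {d | ∃ x ∈ C, x ≠ 0 ∧ eucWt x = d}

/-- Minimum Hamming weight among nonzero codewords of a binary code. -/
noncomputable def minHam (C : Set (ι → ZMod 2)) : ℕ := sInf {d | ∃ x ∈ C, x ≠ 0 ∧ hWt x = d}

/-- A binary code is doubly even if all weights are divisible by 4. -/
def DoublyEven (C : Set (ι → ZMod 2)) : Prop := ∀ x ∈ C, 4 ∣ hWt x

/-- A binary code is singly even if some codeword has weight not divisible by 4. -/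
def SinglyEven (C : Set (ι → ZMod 2)) : Prop := ∃ x ∈ C, ¬ 4 ∣ hWt x

/-- A self-dual `ZMod 4`-code is Type II if all Euclidean weights are divisible by 8. -/
def TypeII (C : Set (ι → ZMod 4)) : Prop := ∀ x ∈ C, 8 ∣ eucWt x

/-- The doubly even subcode of a binary code. -/
def evenSubcode (D : Set (ι → ZMod 2)) : Set (ι → ZMod 2) := {x ∈ D | 4 ∣ hWt x}

/-- The shadow `S = D₀^⊥ \ D` of a binary code. -/
def shadow (D : Set (ι → ZMod 2)) : Set (ι → ZMod 2) := dual2 (evenSubcode D) \ D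

/-- A binary singly even self-dual code is s-extremal if equality holds in the
Bachoc–Gaborit bound relating the minimum weight of the code and of its shadow. -/
def SExtremal (D : Submodule (ZMod 2) (ι → ZMod 2)) : Prop :=
  SelfDual2 D ∧ SinglyEven (D : Set (ι → ZMod 2)) ∧
  ((¬ (Fintype.card ι % 24 = 22 ∧
        minHam (D : Set (ι → ZMod 2)) = 4 * (Fintype.card ι / 24) + 6)) →
      minHam (shadow (D : Set (ι → ZMod 2))) + 2 * minHam (D : Set (ι → ZMod 2)) =
        Fintype.card ι / 2 + 4) ∧
  ((Fintype.card ι % 24 = 22 ∧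
        minHam (D : Set (ι → ZMod 2)) = 4 * (Fintype.card ι / 24) + 6) →
      minHam (shadow (D : Set (ι → ZMod 2))) + 2 * minHam (D : Set (ι → ZMod 2)) =
        Fintype.card ι / 2 + 8)

/-- Equivalence of `ZMod 4`-codes: coordinate permutation together with sign changes. -/
def Z4Equiv (C C' : Set (ι → ZMod 4)) : Prop :=
  ∃ σ : Equiv.Perm ι, ∃ ε : ι → ZMod 4, (∀ i, ε i = 1 ∨ ε i = -1) ∧
    C' = (fun x => fun i => ε i * x (σ i)) '' C

/-- Covering radius of a binary code. -/
noncomputable def covRad (C : Set (ι → ZMod 2)) : ℕ :=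
  sInf {R | ∀ v : ι → ZMod 2, ∃ c ∈ C, hWt (v - c) ≤ R}

/-- Entry `(i,j)` of the circulant matrix with first row `r`. -/
def circEntry {m : ℕ} (r : Fin m → ZMod 4) (i j : Fin m) : ZMod 4 := r (j - i)

/-- Entry `(i,j)` of the negacirculant matrix with first row `r`. -/
def negaEntry {m : ℕ} (r : Fin m → ZMod 4) (i j : Fin m) : ZMod 4 :=
  if i.val ≤ j.val then r (j - i) else - r (j - i)

/-- The bordered part `B` of the generator matrix of a bordered double circulant code. -/
def bdcB {m : ℕ} (α β γ : ZMod 4) (r : Fin m → ZMod 4) :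
    Fin (m+1) → Fin (m+1) → ZMod 4 :=
  Fin.cases (Fin.cases α fun _ => β) (fun i' => Fin.cases γ fun j' => circEntry r i' j')

/-- Row `i` of the generator matrix `(I | B)` of a bordered double circulant code. -/
def bdcRow {m : ℕ} (α β γ : ZMod 4) (r : Fin m → ZMod 4) (i : Fin (m+1)) :
    (Fin (m+1) ⊕ Fin (m+1)) → ZMod 4 :=
  Sum.elim (fun j => if j = i then 1 else 0) (bdcB α β γ r i)

/-- The bordered double circulant code of length `2(m+1)`. -/
def bdcCode {m : ℕ} (α β γ : ZMod 4) (r : Fin m → ZMod 4) :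
    Submodule (ZMod 4) ((Fin (m+1) ⊕ Fin (m+1)) → ZMod 4) :=
  Submodule.span (ZMod 4) (Set.range (bdcRow α β γ r))

/-- The block matrix `[[A, B], [-Bᵀ, Aᵀ]]` built from negacirculant `A`, `B`. -/
def fourNegaM {n : ℕ} (a b : Fin n → ZMod 4) :
    (Fin n ⊕ Fin n) → (Fin n ⊕ Fin n) → ZMod 4
  | Sum.inl i, Sum.inl j => negaEntry a i j
  | Sum.inl i, Sum.inr j => negaEntry b i j
  | Sum.inr i, Sum.inl j => - negaEntry b j i
  | Sum.inr i, Sum.inr j => negaEntry a j i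

/-- Row `i` of the generator matrix `(I | M)` of a four-negacirculant code. -/
def fourNegaRow {n : ℕ} (a b : Fin n → ZMod 4) (i : Fin n ⊕ Fin n) :
    ((Fin n ⊕ Fin n) ⊕ (Fin n ⊕ Fin n)) → ZMod 4 :=
  Sum.elim (fun j => if j = i then 1 else 0) (fourNegaM a b i)

/-- The four-negacirculant code of length `4n`. -/
def fourNegaCode {n : ℕ} (a b : Fin n → ZMod 4) :
    Submodule (ZMod 4) (((Fin n ⊕ Fin n) ⊕ (Fin n ⊕ Fin n)) → ZMod 4) :=
  Submodule.span (ZMod 4) (Set.range (fourNegaRow a b))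

end Z4Note

namespace Z4Note

section Codes
variable {n : ℕ}

/-- The sign character of `ZMod 2`. -/
def sgn (R : Type*) [CommRing R] (a : ZMod 2) : R := if a = 0 then 1 else -1

lemma zmod2_cases (a : ZMod 2) : a = 0 ∨ a = 1 := by
  revert a; decide

lemma sgn_add (R : Type*) [CommRing R] (a b : ZMod 2) : sgn R (a + b) = sgn R a * sgn R b := by
  rcases zmod2_cases a with rfl | rfl <;> rcases zmod2_cases b with rfl | rfl <;>
    simp [sgn, show (1 + 1 : ZMod 2) = 0 from by decide]

lemma sgn_zero (R : Type*) [CommRing R] : sgn R 0 = 1 := by simp [sgn]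

lemma sgn_sum (R : Type*) [CommRing R] {α : Type*} (s : Finset α) (f : α → ZMod 2) :
    sgn R (∑ i ∈ s, f i) = ∏ i ∈ s, sgn R (f i) := by
  classical
  induction s using Finset.induction_on with
  | empty => simp [sgn]
  | insert a s ha ih => rw [Finset.sum_insert ha, Finset.prod_insert ha, sgn_add, ih]

/-- inner product -/
def ip (x y : Fin n → ZMod 2) : ZMod 2 := ∑ i, x i * y i

lemma ip_add_left (x y z : Fin n → ZMod 2) : ip (x + y) z = ip x z + ip y z := by
  simp [ip, add_mul, Finset.sum_add_distrib]

lemma ip_add_right (x y z : Fin n → ZMod 2) : ip x (y + z) = ip x y + ip x z := by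
  simp [ip, mul_add, Finset.sum_add_distrib]

lemma ip_comm (x y : Fin n → ZMod 2) : ip x y = ip y x := by
  simp [ip, mul_comm]

lemma add_self_vec (x : Fin n → ZMod 2) : x + x = 0 := by
  funext i
  rcases zmod2_cases (x i) with h | h <;> simp [h]; decide

/-- the dual as a subgroup -/
def dualG (D : AddSubgroup (Fin n → ZMod 2)) : AddSubgroup (Fin n → ZMod 2) where
  carrier := {x | ∀ y ∈ D, ip x y = 0}
  zero_mem' := by intro y _; simp [ip]
  add_mem' := by
    intro a b ha hb y hy
    rw [ip_add_left, ha y hy, hb y hy, add_zero]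
  neg_mem' := by
    intro a ha y hy
    have := ha y hy
    simp only [ip, Pi.neg_apply, neg_mul, Finset.sum_neg_distrib] at *
    rw [this, neg_zero]

lemma mem_dualG {D : AddSubgroup (Fin n → ZMod 2)} {x : Fin n → ZMod 2} :
    x ∈ dualG D ↔ ∀ y ∈ D, ip x y = 0 := Iff.rfl

open Classical in
/-- the elements of a subgroup, as a finset -/
noncomputable def els (D : AddSubgroup (Fin n → ZMod 2)) : Finset (Fin n → ZMod 2) :=
  Finset.univ.filter fun x => x ∈ D

lemma mem_els {D : AddSubgroup (Fin n → ZMod 2)} {x : Fin n → ZMod 2} :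
    x ∈ els D ↔ x ∈ D := by simp [els]

open Classical in
lemma sum_char (R : Type*) [CommRing R] [CharZero R] [NoZeroDivisors R]
    (D : AddSubgroup (Fin n → ZMod 2)) (v : Fin n → ZMod 2) :
    ∑ c ∈ els D, sgn R (ip c v) = if v ∈ dualG D then ((els D).card : R) else 0 := by
  split_ifs with h
  · rw [Finset.sum_congr rfl (g := fun _ => (1 : R))]
    · simp
    · intro c hc
      rw [ip_comm, h c (mem_els.1 hc), sgn_zero]
  · rw [mem_dualG] at h
    push Not at h
    obtain ⟨y, hy, hyv⟩ := h
    have hy1 : sgn R (ip y v) = -1 := by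
      rw [ip_comm]; simp [sgn, hyv]
    have key : ∑ c ∈ els D, sgn R (ip c v) = ∑ c ∈ els D, sgn R (ip (c + y) v) := by
      symm
      apply Finset.sum_bij (fun c _ => c + y)
      · intro c hc; exact mem_els.2 (D.add_mem (mem_els.1 hc) hy)
      · intro a _ b _ hab; exact add_right_cancel hab
      · intro b hb
        exact ⟨b + y, mem_els.2 (D.add_mem (mem_els.1 hb) hy), by
          rw [add_assoc, add_self_vec, add_zero]⟩
      · intro c _; rfl
    simp only [ip_add_left, sgn_add, hy1, mul_neg, mul_one, Finset.sum_neg_distrib] at key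
    have h2 : (2 : R) * ∑ c ∈ els D, sgn R (ip c v) = 0 := by linear_combination key
    exact (mul_eq_zero.1 h2).resolve_left two_ne_zero

lemma hWt_eq_sum (x : Fin n → ZMod 2) : hWt x = ∑ i, (x i).val := by
  rw [hWt, Finset.card_filter]
  refine Finset.sum_congr rfl fun i _ => ?_
  rcases zmod2_cases (x i) with h | h <;> simp [h]; rfl

lemma hWt_le (x : Fin n → ZMod 2) : hWt x ≤ n := by
  simpa [hWt] using Finset.card_filter_le (Finset.univ : Finset (Fin n)) (fun i => x i ≠ 0)

lemma pow_hWt {R : Type*} [CommRing R] (y : R) (x : Fin n → ZMod 2) :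
    y ^ hWt x = ∏ i, y ^ (x i).val := by
  rw [hWt_eq_sum, Finset.prod_pow_eq_pow_sum]

lemma prod_two {R : Type*} [CommRing R] (a b : R) (x : Fin n → ZMod 2) :
    ∏ i, (if x i = 0 then a else b) = a ^ (n - hWt x) * b ^ hWt x := by
  rw [Finset.prod_ite]
  simp only [Finset.prod_const]
  have h := Finset.card_filter_add_card_filter_not (s := (Finset.univ : Finset (Fin n)))
    (p := fun i => x i = 0)
  simp only [Finset.card_univ, Fintype.card_fin] at h
  have h3 : (Finset.univ.filter fun i => x i = 0).card = n - hWt x := by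
    unfold hWt; simp only [ne_eq]; omega
  rw [h3]; rfl

lemma sum_vec_char {R : Type*} [CommRing R] (y : R) (c : Fin n → ZMod 2) :
    ∑ v : Fin n → ZMod 2, sgn R (ip c v) * y ^ hWt v
      = (1 + y) ^ (n - hWt c) * (1 - y) ^ hWt c := by
  rw [← prod_two]
  have : ∀ i, (if c i = 0 then 1 + y else 1 - y) =
      ∑ a : ZMod 2, sgn R (c i * a) * y ^ a.val := by
    intro i
    have hu : (Finset.univ : Finset (ZMod 2)) = {0, 1} := by decide
    have hv : (1 : ZMod 2).val = 1 := rfl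
    rw [hu]
    rcases zmod2_cases (c i) with h | h <;> simp [h, sgn, hv]
    ring
  simp_rw [this]
  rw [Finset.prod_univ_sum]
  simp only [Fintype.piFinset_univ]
  refine Finset.sum_congr rfl fun v _ => ?_
  rw [ip, sgn_sum, pow_hWt, Finset.prod_mul_distrib]

/-- MacWilliams identity -/
lemma macWilliams {R : Type*} [CommRing R] [CharZero R] [NoZeroDivisors R]
    (D : AddSubgroup (Fin n → ZMod 2)) (y : R) :
    ∑ c ∈ els D, (1 + y) ^ (n - hWt c) * (1 - y) ^ hWt c
      = ((els D).card : R) * ∑ v ∈ els (dualG D), y ^ hWt v := by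
  classical
  simp_rw [← sum_vec_char]
  rw [Finset.sum_comm]
  simp_rw [← Finset.sum_mul, sum_char]
  simp only [ite_mul, zero_mul]
  rw [← Finset.sum_filter, Finset.mul_sum]
  rfl

lemma hWt_eq_zero {x : Fin n → ZMod 2} : hWt x = 0 ↔ x = 0 := by
  rw [hWt, Finset.card_eq_zero, Finset.filter_eq_empty_iff]
  simp [funext_iff]

lemma card_mul_dual (D : AddSubgroup (Fin n → ZMod 2)) :
    (els D).card * (els (dualG D)).card = 2 ^ n := by
  have h := macWilliams (R := ℤ) D 1
  have h2 : ∑ c ∈ els D, ((1 : ℤ) + 1) ^ (n - hWt c) * (1 - 1) ^ hWt c = 2 ^ n := by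
    rw [Finset.sum_eq_single 0]
    · simp [hWt_eq_zero.2 rfl]
    · intro b _ hb
      rw [sub_self, zero_pow (fun h => hb (hWt_eq_zero.1 h)), mul_zero]
    · intro h; exact absurd (mem_els.2 D.zero_mem) h
  rw [h2] at h
  simp at h
  exact_mod_cast h.symm

/-- The number of common ones. -/
def comm (x y : Fin n → ZMod 2) : ℕ := ∑ i, (x i).val * (y i).val

lemma hWt_add (x y : Fin n → ZMod 2) : hWt (x + y) + 2 * comm x y = hWt x + hWt y := by
  simp only [hWt_eq_sum, comm, Finset.mul_sum, ← Finset.sum_add_distrib, Pi.add_apply]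
  refine Finset.sum_congr rfl fun i _ => ?_
  generalize x i = a
  generalize y i = b
  revert a b; decide

lemma ip_eq_comm (x y : Fin n → ZMod 2) : ip x y = (comm x y : ZMod 2) := by
  simp [ip, comm]

lemma ip_eq_zero_iff (x y : Fin n → ZMod 2) : ip x y = 0 ↔ 2 ∣ comm x y := by
  rw [ip_eq_comm, ZMod.natCast_eq_zero_iff]

/-- the all-one vector -/
def ones : Fin n → ZMod 2 := fun _ => 1

lemma comm_ones (x : Fin n → ZMod 2) : comm ones x = hWt x := by
  have hv : (1 : ZMod 2).val = 1 := rfl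
  simp [comm, hWt_eq_sum, ones, hv]

lemma hWt_ones : hWt (ones : Fin n → ZMod 2) = n := by
  simp [hWt, ones]

/-- doubly even subgroup -/
def DE (D : AddSubgroup (Fin n → ZMod 2)) : Prop := ∀ x ∈ D, 4 ∣ hWt x

lemma DE.selfOrth {D : AddSubgroup (Fin n → ZMod 2)} (h : DE D) : D ≤ dualG D := by
  intro x hx y hy
  rw [ip_eq_zero_iff]
  have h1 := h x hx
  have h2 := h y hy
  have h3 := h _ (D.add_mem hx hy)
  have := hWt_add x y
  omega

lemma maximal_mem {D : AddSubgroup (Fin n → ZMod 2)} (hD : Maximal DE D)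
    {v : Fin n → ZMod 2} (hv : v ∈ dualG D) (hw : 4 ∣ hWt v) : v ∈ D := by
  let E : AddSubgroup (Fin n → ZMod 2) :=
    { carrier := {x | x ∈ D ∨ x + v ∈ D}
      zero_mem' := Or.inl D.zero_mem
      add_mem' := by
        rintro a b (ha | ha) (hb | hb)
        · exact Or.inl (D.add_mem ha hb)
        · right; rw [add_assoc]; exact D.add_mem ha hb
        · right; rw [add_right_comm]; exact D.add_mem ha hb
        · left
          have := D.add_mem ha hb
          rwa [show a + v + (b + v) = a + b + (v + v) by abel, add_self_vec, add_zero] at this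
      neg_mem' := by
        intro a ha
        have : -a = a := by
          rw [neg_eq_iff_add_eq_zero]; exact add_self_vec a
        simpa [this] using ha }
  have hE : DE E := by
    rintro x (hx | hx)
    · exact hD.1 x hx
    · have h1 := hWt_add (x + v) v
      rw [add_assoc, add_self_vec, add_zero] at h1
      have h2 := hD.1 _ hx
      have h3 := (ip_eq_zero_iff _ _).1 ((ip_comm _ _).trans (hv _ hx))
      omega
  have hle : D ≤ E := fun x hx => Or.inl hx
  exact hD.2 hE hle (Or.inr (by rw [add_self_vec]; exact D.zero_mem))

lemma ones_mem {D : AddSubgroup (Fin n → ZMod 2)} (hD : Maximal DE D) (hn : 4 ∣ n) :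
    ones ∈ D := by
  apply maximal_mem hD
  · intro y hy
    rw [ip_eq_zero_iff, comm_ones]
    have := hD.1 y hy
    omega
  · rwa [hWt_ones]

lemma selfDual_of_maximal {k : ℕ} {D : AddSubgroup (Fin (8 * k) → ZMod 2)} (hD : Maximal DE D) :
    dualG D = D := by
  apply le_antisymm _ hD.1.selfOrth
  by_contra hcon
  obtain ⟨v0, hv0, hv0'⟩ := SetLike.not_le_iff_exists.1 hcon
  have h := macWilliams (R := ℂ) D Complex.I
  have e4 : (1 - Complex.I) ^ 4 = (1 + Complex.I) ^ 4 := by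
    linear_combination (-8 * Complex.I) * Complex.I_sq
  have e8 : (1 + Complex.I) ^ 8 = 16 := by
    have : (1 + Complex.I) ^ 2 = 2 * Complex.I := by linear_combination Complex.I_sq
    calc (1 + Complex.I) ^ 8 = ((1 + Complex.I) ^ 2) ^ 4 := by ring
      _ = 16 * Complex.I ^ 4 := by rw [this]; ring
      _ = 16 := by rw [Complex.I_pow_four, mul_one]
  have hL : ∑ c ∈ els D, (1 + Complex.I) ^ (8 * k - hWt c) * (1 - Complex.I) ^ hWt c
      = ((els D).card : ℂ) * 16 ^ k := by
    rw [Finset.sum_congr rfl (g := fun _ => (16 : ℂ) ^ k)]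
    · simp
    · intro c hc
      obtain ⟨m, hm⟩ := hD.1 c (mem_els.1 hc)
      have hle := hWt_le c
      rw [hm] at hle ⊢
      rw [pow_mul (1 - Complex.I), e4, ← pow_mul, ← pow_add, Nat.sub_add_cancel hle, pow_mul, e8]
  rw [hL] at h
  have hc0 : ((els D).card : ℂ) ≠ 0 := by
    have : 0 < (els D).card := Finset.card_pos.2 ⟨0, mem_els.2 D.zero_mem⟩
    exact_mod_cast this.ne'
  have h' := mul_left_cancel₀ hc0 h
  classical
  have hsub : els D ⊆ els (dualG D) := fun x hx => mem_els.2 (hD.1.selfOrth (mem_els.1 hx))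
  rw [← Finset.sum_sdiff hsub] at h'
  rw [Finset.sum_congr rfl (g := fun _ => (-1 : ℂ)) (s₁ := els (dualG D) \ els D),
    Finset.sum_congr rfl (g := fun _ => (1 : ℂ)) (s₁ := els D)] at h'
  · simp only [Finset.sum_const, nsmul_eq_mul, mul_one, mul_neg] at h'
    have hcard : (els D).card ≤ (els (dualG D) \ els D).card := by
      apply Finset.card_le_card_of_injOn (fun c => c + v0)
      · intro c hc
        have hc := mem_els.1 hc
        simp only [Finset.coe_sdiff, Set.mem_sdiff, Finset.mem_coe, mem_els]
        refine ⟨(dualG D).add_mem (hD.1.selfOrth hc) hv0, fun h => hv0' ?_⟩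
        have := D.sub_mem h hc
        simpa using this
      · intro a _ b _ hab; exact add_right_cancel hab
    have h2 : (16 : ℤ) ^ k = -((els (dualG D) \ els D).card : ℤ) + (els D).card := by
      exact_mod_cast h'
    have h3 : (0 : ℤ) < 16 ^ k := by positivity
    omega
  · intro c hc
    obtain ⟨m, hm⟩ := hD.1 c (mem_els.1 hc)
    rw [hm, pow_mul, Complex.I_pow_four, one_pow]
  · intro v hv
    rw [Finset.mem_sdiff, mem_els, mem_els] at hv
    have h1 := hv.1 _ (ones_mem hD (by omega))
    rw [ip_comm, ip_eq_zero_iff, comm_ones] at h1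
    have h2 : ¬ 4 ∣ hWt v := fun h => hv.2 (maximal_mem hD hv.1 h)
    obtain ⟨m, hm⟩ : ∃ m, hWt v = 4 * m + 2 := ⟨hWt v / 4, by omega⟩
    rw [hm, pow_add, pow_mul, Complex.I_pow_four, one_pow, one_mul, Complex.I_sq]

/-- unit vector -/
def evec (i : Fin n) : Fin n → ZMod 2 := Pi.single i 1

lemma ip_evec (c : Fin n → ZMod 2) (i : Fin n) : ip c (evec i) = c i := by
  simp [ip, evec, Pi.single_apply]

lemma hWt_evec_add (x : Fin n → ZMod 2) (i : Fin n) : hWt (x + evec i) ≤ hWt x + 1 := by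
  have h := hWt_add x (evec i)
  have h1 : hWt (evec i) ≤ 1 := by
    rw [hWt, Finset.card_le_one]
    intro a ha b hb
    simp only [evec, Finset.mem_filter, Pi.single_apply] at ha hb
    simp at ha hb
    rw [ha, hb]
  omega

lemma two_hWt (c : Fin n → ZMod 2) : 2 * (hWt c : ℚ) = ∑ i, (1 - sgn ℚ (c i)) := by
  have hv : (1 : ZMod 2).val = 1 := rfl
  rw [hWt_eq_sum, Nat.cast_sum, Finset.mul_sum]
  refine Finset.sum_congr rfl fun i _ => ?_
  rcases zmod2_cases (c i) with h | h <;> simp [h, sgn, hv]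
  norm_num

/-- The Delsarte covering radius argument. -/
lemma delsarte_aux (D : AddSubgroup (Fin n → ZMod 2)) (L : List ℚ) :
    ∀ v : Fin n → ZMod 2, (∀ d ∈ dualG D, L.length < hWt (v + d)) →
      ∑ c ∈ els D, (L.map fun a => a - (hWt c : ℚ)).prod * sgn ℚ (ip c v) = 0 := by
  induction L with
  | nil =>
    intro v hv
    simp only [List.map_nil, List.prod_nil, one_mul]
    rw [sum_char, if_neg]
    intro h
    have := hv v h
    rw [add_self_vec, hWt_eq_zero.2 rfl] at this
    simp at this
  | cons a L ih =>
    intro v hv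
    simp only [List.length_cons] at hv
    have h0 := ih v (fun d hd => by have := hv d hd; omega)
    have h1 : ∀ i, ∑ c ∈ els D,
        (L.map fun a => a - (hWt c : ℚ)).prod * sgn ℚ (ip c (v + evec i)) = 0 := by
      intro i
      apply ih
      intro d hd
      have h2 := hv d hd
      have h3 := hWt_evec_add (v + evec i + d) i
      rw [show v + evec i + d + evec i = v + d + (evec i + evec i) by abel, add_self_vec,
        add_zero] at h3
      omega
    have h2 : 2 * ∑ c ∈ els D, (((a :: L).map fun a => a - (hWt c : ℚ)).prod * sgn ℚ (ip c v))
        = 2 * a * ∑ c ∈ els D, (L.map fun a => a - (hWt c : ℚ)).prod * sgn ℚ (ip c v)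
          - ∑ i : Fin n, (∑ c ∈ els D, (L.map fun a => a - (hWt c : ℚ)).prod * sgn ℚ (ip c v)
            - ∑ c ∈ els D,
              (L.map fun a => a - (hWt c : ℚ)).prod * sgn ℚ (ip c (v + evec i))) := by
      simp_rw [← Finset.sum_sub_distrib]
      rw [Finset.sum_comm, Finset.mul_sum, Finset.mul_sum, ← Finset.sum_sub_distrib]
      refine Finset.sum_congr rfl fun c _ => ?_
      simp_rw [ip_add_right, sgn_add, ip_evec]
      simp only [List.map_cons, List.prod_cons]
      have : ∀ i, (List.map (fun a => a - (hWt c : ℚ)) L).prod * sgn ℚ (ip c v) -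
          (List.map (fun a => a - (hWt c : ℚ)) L).prod * (sgn ℚ (ip c v) * sgn ℚ (c i))
          = ((List.map (fun a => a - (hWt c : ℚ)) L).prod * sgn ℚ (ip c v)) * (1 - sgn ℚ (c i)) :=
        fun i => by ring
      simp_rw [this]
      rw [← Finset.mul_sum, ← two_hWt]
      ring
    rw [h0] at h2
    simp_rw [h1] at h2
    simpa using h2

lemma delsarte (D : AddSubgroup (Fin n → ZMod 2)) (L : List ℕ) (hL : ∀ a ∈ L, a ≠ 0)
    (hD : ∀ c ∈ D, c ≠ 0 → hWt c ∈ L) (v : Fin n → ZMod 2) :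
    ∃ d ∈ dualG D, hWt (v + d) ≤ L.length := by
  by_contra hcon
  push Not at hcon
  have h := delsarte_aux D (L.map fun a : ℕ => (a : ℚ)) v (by simpa using hcon)
  rw [Finset.sum_eq_single 0] at h
  · have hz : hWt (0 : Fin n → ZMod 2) = 0 := hWt_eq_zero.2 rfl
    have hi : ip (0 : Fin n → ZMod 2) v = 0 := by simp [ip]
    rw [hz, hi, sgn_zero, mul_one, List.prod_eq_zero_iff] at h
    simp at h
    exact hL 0 h rfl
  · intro c hc hc0
    have := hD c (mem_els.1 hc) hc0
    rw [List.prod_eq_zero_iff.2, zero_mul]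
    simp only [List.map_map, List.mem_map, Function.comp]
    exact ⟨hWt c, this, by simp⟩
  · intro h; exact absurd (mem_els.2 D.zero_mem) h

end Codes

end Z4Note

namespace Z4Note

section Gleason
open Polynomial

/-- Palindromic of degree `M`. -/
def Pal (M : ℕ) (f : ℝ[X]) : Prop := f.natDegree ≤ M ∧ f.reflect M = f

/-- Invariance under the MacWilliams transform. -/
def Mac (M : ℕ) (f : ℝ[X]) : Prop :=
  ∀ y : ℝ, y ≠ -1 → (1 + y) ^ (4 * M) * f.eval (((1 - y) / (1 + y)) ^ 4) = 4 ^ M * f.eval (y ^ 4)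

/-- Both. -/
def Inv (M : ℕ) (f : ℝ[X]) : Prop := Pal M f ∧ Mac M f

lemma Pal.mul {M N : ℕ} {f g : ℝ[X]} (hf : Pal M f) (hg : Pal N g) : Pal (M + N) (f * g) := by
  refine ⟨natDegree_mul_le_of_le hf.1 hg.1, ?_⟩
  rw [reflect_mul _ _ hf.1 hg.1, hf.2, hg.2]

lemma Mac.mul {M N : ℕ} {f g : ℝ[X]} (hf : Mac M f) (hg : Mac N g) : Mac (M + N) (f * g) := by
  intro y hy
  have h1 := hf y hy
  have h2 := hg y hy
  rw [eval_mul, eval_mul]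
  calc _ = ((1 + y) ^ (4 * M) * f.eval (((1 - y) / (1 + y)) ^ 4)) *
        ((1 + y) ^ (4 * N) * g.eval (((1 - y) / (1 + y)) ^ 4)) := by ring
    _ = _ := by rw [h1, h2]; ring

lemma Inv.mul {M N : ℕ} {f g : ℝ[X]} (hf : Inv M f) (hg : Inv N g) : Inv (M + N) (f * g) :=
  ⟨hf.1.mul hg.1, hf.2.mul hg.2⟩

lemma Inv.one : Inv 0 (1 : ℝ[X]) := by
  refine ⟨⟨by simp, by simp⟩, ?_⟩
  intro y _; simp

lemma Inv.pow {M : ℕ} {f : ℝ[X]} (hf : Inv M f) (a : ℕ) : Inv (M * a) (f ^ a) := by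
  induction a with
  | zero => simpa using Inv.one
  | succ a ih => rw [pow_succ, Nat.mul_succ]; exact ih.mul hf

lemma Inv.sub {M : ℕ} {f g : ℝ[X]} (hf : Inv M f) (hg : Inv M g) (a : ℝ) :
    Inv M (f - C a * g) := by
  refine ⟨⟨?_, ?_⟩, ?_⟩
  · exact (natDegree_sub_le_of_le hf.1.1 ((natDegree_C_mul_le a g).trans hg.1.1)).trans (by simp)
  · rw [reflect_sub, reflect_C_mul, hf.1.2, hg.1.2]
  · intro y hy
    have h1 := hf.2 y hy
    have h2 := hg.2 y hy
    simp only [eval_sub, eval_mul, eval_C]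
    linear_combination h1 - a * h2

/-- Weight enumerator of the Hamming code, in `x = y ^ 4`. -/
noncomputable def pE : ℝ[X] := 1 + C 14 * X + X ^ 2
/-- The invariant of degree 24, in `x = y ^ 4`. -/
noncomputable def pD : ℝ[X] := X * (1 - X) ^ 4

lemma pal_quad (a b : ℝ) : Pal 2 (C a + C b * X + C a * X ^ 2) := by
  refine ⟨by compute_degree, ?_⟩
  ext i
  rw [coeff_reflect]
  rcases i with _ | _ | _ | i
  · rw [revAt_le (by omega)]; simp [coeff_X, coeff_C, coeff_X_pow]
  · rw [revAt_le (by omega)]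
  · rw [revAt_le (by omega)]; simp [coeff_X, coeff_C, coeff_X_pow]
  · rw [revAt_eq_self_of_lt (by omega)]

lemma inv_pE : Inv 2 pE := by
  refine ⟨?_, ?_⟩
  · have := pal_quad 1 14
    simpa [pE] using this
  · intro y hy
    have : 1 + y ≠ 0 := fun h => hy (by linarith)
    simp only [pE, eval_add, eval_mul, eval_C, eval_X, eval_pow, eval_one]
    field_simp
    ring

lemma inv_pD : Inv 6 pD := by
  refine ⟨?_, ?_⟩
  · have h1 := pal_quad 0 1
    have h2 := pal_quad 1 (-2)
    have h3 := (h1.mul h2).mul h2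
    have : pD = (C 0 + C 1 * X + C 0 * X ^ 2) * (C 1 + C (-2) * X + C 1 * X ^ 2) *
        (C 1 + C (-2) * X + C 1 * X ^ 2) := by
      simp only [map_zero, map_one, map_neg, show (C (2:ℝ)) = 2 from rfl, pD]
      ring
    rw [this]
    exact h3
  · intro y hy
    have : 1 + y ≠ 0 := fun h => hy (by linarith)
    simp only [pD, eval_sub, eval_mul, eval_X, eval_pow, eval_one]
    field_simp
    ring

lemma mac_dvd {M m : ℕ} {f : ℝ[X]} (hf : Mac M f) (h : X ^ m ∣ f) : (X - C 1) ^ (4 * m) ∣ f := by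
  by_cases hf0 : f = 0
  · simp [hf0]
  obtain ⟨h1, hh1, hnd⟩ := exists_eq_pow_rootMultiplicity_mul_and_not_dvd f hf0 1
  set r := rootMultiplicity 1 f with hr
  have hne : h1.eval 1 ≠ 0 := fun h => hnd (dvd_iff_isRoot.2 h)
  rw [← le_rootMultiplicity_iff hf0, ← hr]
  by_contra hlt
  push Not at hlt
  obtain ⟨g, hg⟩ := h
  obtain ⟨s, hs⟩ : ∃ s, 4 * m = r + (s + 1) := ⟨4 * m - r - 1, by omega⟩
  -- the two continuous functions
  let F : ℝ → ℝ := fun y => (1 + y) ^ (4 * M) * ((1 - y) ^ (s + 1) / (1 + y) ^ (4 * m)) *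
    g.eval (((1 - y) / (1 + y)) ^ 4)
  let G : ℝ → ℝ := fun y => 4 ^ M * ((-1) ^ r * ((1 + y) * (1 + y ^ 2)) ^ r * h1.eval (y ^ 4))
  have hFc : ContinuousAt F 1 := by
    have e : (1 : ℝ) + 1 ≠ 0 := by norm_num
    have hq : ContinuousAt (fun y : ℝ => ((1 - y) / (1 + y)) ^ 4) 1 := by
      apply ContinuousAt.pow
      apply ContinuousAt.div
      · fun_prop
      · fun_prop
      · exact e
    apply ContinuousAt.mul
    · apply ContinuousAt.mul
      · fun_prop
      · apply ContinuousAt.div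
        · fun_prop
        · fun_prop
        · exact pow_ne_zero _ e
    · exact ContinuousAt.comp (g := fun x => g.eval x) g.continuous.continuousAt hq
  have hGc : ContinuousAt G 1 := by
    have := h1.continuous
    apply Continuous.continuousAt
    fun_prop
  have heq : ∀ᶠ y in nhdsWithin (1 : ℝ) {1}ᶜ, F y = G y := by
    have hne1 : ∀ᶠ y in nhdsWithin (1 : ℝ) {1}ᶜ, y ≠ -1 :=
      (isOpen_ne.mem_nhds (by norm_num : (1 : ℝ) ≠ -1)) |> fun h => mem_nhdsWithin_of_mem_nhds h
    filter_upwards [hne1, self_mem_nhdsWithin] with y hy hy1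
    have hy1 : 1 - y ≠ 0 := fun h => hy1 (by simp; linarith)
    have hy2 : 1 + y ≠ 0 := fun h => hy (by linarith)
    have key := hf y hy
    rw [show f.eval (y ^ 4) = (y ^ 4 - 1) ^ r * h1.eval (y ^ 4) by
      conv_lhs => rw [hh1]
      simp] at key
    rw [show f.eval (((1 - y) / (1 + y)) ^ 4) =
      ((1 - y) ^ r * (1 - y) ^ (s + 1)) / (1 + y) ^ (4 * m) *
        g.eval (((1 - y) / (1 + y)) ^ 4) by
      rw [hg, eval_mul, eval_pow, eval_X, ← pow_mul, div_pow, ← pow_add, ← hs]] at key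
    rw [show y ^ 4 - 1 = (1 - y) * (-1 * ((1 + y) * (1 + y ^ 2))) by ring, mul_pow (1 - y),
      mul_pow (-1)] at key
    apply mul_left_cancel₀ (pow_ne_zero r hy1)
    simp only [F, G]
    linear_combination key
  have h3 : F 1 = G 1 := by
    have t1 : Filter.Tendsto F (nhdsWithin 1 {1}ᶜ) (nhds (F 1)) :=
      hFc.tendsto.mono_left nhdsWithin_le_nhds
    have t2 : Filter.Tendsto G (nhdsWithin 1 {1}ᶜ) (nhds (G 1)) :=
      hGc.tendsto.mono_left nhdsWithin_le_nhds
    exact tendsto_nhds_unique (t1.congr' heq) t2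
  simp only [F, G] at h3
  simp at h3
  exact hne h3

lemma inv_eq_zero {k : ℕ} {f : ℝ[X]} (hf : Inv (6 * k + 2) f) (h : X ^ (k + 1) ∣ f) : f = 0 := by
  by_contra hf0
  have h1 := mac_dvd hf.2 h
  have hcop : IsCoprime ((X : ℝ[X]) ^ (k + 1)) ((X - C 1) ^ (4 * (k + 1))) := by
    apply IsCoprime.pow
    exact ⟨1, -1, by simp⟩
  have h2 := hcop.mul_dvd h h1
  have h3 := natDegree_le_of_dvd h2 hf0
  rw [natDegree_mul (by simp) (pow_ne_zero _ (X_sub_C_ne_zero 1)), natDegree_pow, natDegree_pow,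
    natDegree_X, natDegree_X_sub_C] at h3
  have h4 : f.natDegree ≤ 5 * k + 1 := by
    rw [natDegree_le_iff_coeff_eq_zero]
    intro N hN
    by_cases hN2 : N ≤ 6 * k + 2
    · rw [← hf.1.2, coeff_reflect, revAt_le hN2]
      exact X_pow_dvd_iff.1 h _ (by omega)
    · exact coeff_eq_zero_of_natDegree_lt (by have := hf.1.1; omega)
  omega

/-- power series 1/(1-x) -/
noncomputable def pU : PowerSeries ℝ := PowerSeries.mk 1
/-- power series version of `pE` -/
noncomputable def sE : PowerSeries ℝ := 1 + 14 * PowerSeries.X + PowerSeries.X ^ 2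
/-- The invariant of degree 12 -/
noncomputable def sP : PowerSeries ℝ :=
  1 - 33 * PowerSeries.X - 33 * PowerSeries.X ^ 2 + PowerSeries.X ^ 3

lemma pU_mul : pU * (1 - PowerSeries.X) = 1 := PowerSeries.mk_one_mul_one_sub_eq_one ℝ

lemma deriv_ofNat14 : (PowerSeries.derivative ℝ) (14 : PowerSeries ℝ) = 0 := by
  have := Derivation.map_natCast (PowerSeries.derivative ℝ) 14
  exact_mod_cast this

lemma deriv_sE : (PowerSeries.derivative ℝ) sE = 14 + 2 * PowerSeries.X := by
  rw [sE, map_add, map_add, Derivation.leibniz, Derivation.leibniz_pow, deriv_ofNat14,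
    PowerSeries.derivative_X, Derivation.map_one_eq_zero]
  simp

lemma deriv_pU : (PowerSeries.derivative ℝ) pU = pU ^ 2 := by
  have h := congrArg (PowerSeries.derivative ℝ) pU_mul
  rw [Derivation.leibniz, map_sub, PowerSeries.derivative_X, Derivation.map_one_eq_zero] at h
  simp only [smul_eq_mul] at h
  have h2 := pU_mul
  linear_combination pU * h - ((PowerSeries.derivative ℝ) pU) * h2

lemma coeff_exact (m : ℕ) :
    PowerSeries.coeff (m + 1) (sE ^ (3 * m + 2) * sP * pU ^ (4 * m + 5)) = 0 := by
  set G := sE ^ (3 * m + 3) * pU ^ (4 * m + 4) with hG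
  have hd : (PowerSeries.derivative ℝ) G =
      ((m : PowerSeries ℝ) + 1) * (sE ^ (3 * m + 2) * pU ^ (4 * m + 4) *
        (3 * (14 + 2 * PowerSeries.X) + 4 * sE * pU)) := by
    rw [hG, Derivation.leibniz, Derivation.leibniz_pow, Derivation.leibniz_pow, deriv_sE, deriv_pU]
    simp only [smul_eq_mul, nsmul_eq_mul,
      show 3 * m + 3 - 1 = 3 * m + 2 by omega, show 4 * m + 4 - 1 = 4 * m + 3 by omega]
    push_cast
    ring
  have key : ((m : PowerSeries ℝ) + 1) * (sE ^ (3 * m + 2) * sP * pU ^ (4 * m + 5))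
      = ((m : PowerSeries ℝ) + 1) * G - PowerSeries.X * (PowerSeries.derivative ℝ) G := by
    rw [hd, hG]
    have h1 : sP = (1 - PowerSeries.X) * (sE - 3 * PowerSeries.X * (14 + 2 * PowerSeries.X))
        - 4 * PowerSeries.X * sE := by
      rw [sP, sE]; ring
    rw [h1]
    have h2 := pU_mul
    linear_combination ((m : PowerSeries ℝ) + 1) * sE ^ (3 * m + 2) * pU ^ (4 * m + 4) *
      (sE - 3 * PowerSeries.X * (14 + 2 * PowerSeries.X)) * h2
  have h3 := congrArg (PowerSeries.coeff (m + 1)) key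
  have hc : ((m : PowerSeries ℝ) + 1) = PowerSeries.C ((m : ℝ) + 1) := by simp
  rw [map_sub, PowerSeries.coeff_succ_X_mul, PowerSeries.coeff_derivative, hc,
    PowerSeries.coeff_C_mul, PowerSeries.coeff_C_mul] at h3
  have h4 : ((m : ℝ) + 1) ≠ 0 := by positivity
  apply mul_left_cancel₀ h4
  rw [h3]; ring

/-- The linear functional. -/
noncomputable def Lf (k : ℕ) (f : ℝ[X]) : ℝ :=
  PowerSeries.coeff (k + 1) ((f : PowerSeries ℝ) * (sE * sP * pU ^ (4 * k + 5)))

lemma Lf_sub (k : ℕ) (f g : ℝ[X]) (a : ℝ) : Lf k (f - C a * g) = Lf k f - a * Lf k g := by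
  simp only [Lf, Polynomial.coe_sub, Polynomial.coe_mul, coe_C, sub_mul, map_sub, mul_assoc, PowerSeries.coeff_C_mul]

lemma pE_coe : ((pE : ℝ[X]) : PowerSeries ℝ) = sE := by
  simp [pE, sE]
  rfl

lemma pD_coe : ((pD : ℝ[X]) : PowerSeries ℝ) = PowerSeries.X * (1 - PowerSeries.X) ^ 4 := by
  simp [pD]

/-- The basis. -/
noncomputable def bas (m j : ℕ) : ℝ[X] := pE ^ (3 * m + 1) * pD ^ j

lemma Lf_bas (m j : ℕ) : Lf (m + j) (bas m j) = 0 := by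
  have h := coeff_exact m
  rw [← PowerSeries.coeff_X_pow_mul _ j] at h
  rw [Lf, bas, show m + j + 1 = m + 1 + j by ring, ← h]
  congr 1
  rw [Polynomial.coe_mul, Polynomial.coe_pow, Polynomial.coe_pow, pE_coe, pD_coe, mul_pow, ← pow_mul]
  have h2 : (pU * (1 - PowerSeries.X)) ^ (4 * j) = 1 := by rw [pU_mul, one_pow]
  rw [mul_pow] at h2
  linear_combination (sE ^ (3 * m + 2) * sP * PowerSeries.X ^ j * pU ^ (4 * m + 5)) * h2

lemma inv_bas (m j : ℕ) : Inv (6 * (m + j) + 2) (bas m j) := by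
  have := (inv_pE.pow (3 * m + 1)).mul (inv_pD.pow j)
  rwa [show 2 * (3 * m + 1) + 6 * j = 6 * (m + j) + 2 by ring] at this

lemma Lf_eq_zero {k : ℕ} {f : ℝ[X]} (hf : Inv (6 * k + 2) f) : Lf k f = 0 := by
  have key : ∀ t, t ≤ k + 1 → ∃ g, Inv (6 * k + 2) g ∧ X ^ t ∣ g ∧ Lf k g = Lf k f := by
    intro t
    induction t with
    | zero => intro _; exact ⟨f, hf, by simp, rfl⟩
    | succ t ih =>
      intro ht
      obtain ⟨g, hg, ⟨q, hq⟩, hL⟩ := ih (by omega)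
      obtain ⟨m, rfl⟩ : ∃ m, k = m + t := ⟨k - t, by omega⟩
      refine ⟨g - C (q.eval 0) * bas m t, hg.sub (inv_bas m t) _, ?_, ?_⟩
      · have : g - C (q.eval 0) * bas m t =
            X ^ t * (q - C (q.eval 0) * (pE ^ (3 * m + 1) * ((1 - X) ^ 4) ^ t)) := by
          rw [hq, bas, pD, mul_pow]; ring
        rw [this, pow_succ]
        apply mul_dvd_mul_left
        rw [X_dvd_iff, coeff_zero_eq_eval_zero]
        simp [pE]
      · rw [Lf_sub, Lf_bas, hL]; ring
  obtain ⟨g, hg, hd, hL⟩ := key (k + 1) le_rfl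
  rw [← hL, inv_eq_zero hg hd]
  simp [Lf]

lemma coeff_pU_pow (d i : ℕ) : PowerSeries.coeff i (pU ^ (d + 1)) = ((d + i).choose d : ℝ) := by
  rw [pU, PowerSeries.mk_one_pow_eq_mk_choose_add, PowerSeries.coeff_mk]

lemma Lf_neg {k : ℕ} {f : ℝ[X]} (h0 : f.coeff 0 = 1) (h : ∀ i, 1 ≤ i → i ≤ k + 1 → f.coeff i = 0) :
    Lf k f < 0 := by
  obtain ⟨q, hq⟩ : X ^ (k + 2) ∣ f - 1 := by
    rw [X_pow_dvd_iff]
    intro d hd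
    rcases Nat.eq_zero_or_pos d with rfl | hd0
    · simp [h0]
    · rw [coeff_sub, h d hd0 (by omega), coeff_one, if_neg (by omega), sub_zero]
  have hf : f = 1 + X ^ (k + 2) * q := by rw [← hq]; ring
  have hz : ∀ g : PowerSeries ℝ, PowerSeries.coeff (k + 1) (PowerSeries.X ^ (k + 2) * g) = 0 := by
    intro g
    exact PowerSeries.X_pow_dvd_iff.1 (dvd_mul_right _ _) _ (by omega)
  set c : ℕ → ℝ := fun i => PowerSeries.coeff i (pU ^ (4 * k + 5)) with hc
  have hcpos : ∀ i, 0 < c i := by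
    intro i
    simp only [hc, coeff_pU_pow]
    exact_mod_cast Nat.choose_pos (by omega)
  have hcmono : ∀ i j, i ≤ j → c i ≤ c j := by
    intro i j hij
    simp only [hc, coeff_pU_pow]
    exact_mod_cast Nat.choose_le_choose _ (by omega)
  have hstep : c (k + 1) = 5 * c k := by
    simp only [hc, coeff_pU_pow]
    have := Nat.add_one_mul_choose_eq (4 * k + 4 + k) k
    have e1 : (4 * k + 4 + (k + 1)).choose (4 * k + 4) = (4 * k + 4 + k + 1).choose (k + 1) :=
      Nat.choose_symm_of_eq_add (by omega)
    have e2 : (4 * k + 4 + k).choose (4 * k + 4) = (4 * k + 4 + k).choose k :=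
      Nat.choose_symm_of_eq_add (by omega)
    rw [e1, e2]
    have h5 : (4 * k + 4 + k + 1).choose (k + 1) * (k + 1)
        = 5 * (4 * k + 4 + k).choose k * (k + 1) := by
      rw [← this]
      ring
    have h6 := Nat.eq_of_mul_eq_mul_right (by omega) h5
    exact_mod_cast h6
  have hL : Lf k f = PowerSeries.coeff (k + 1)
      (pU ^ (4 * k + 5) - PowerSeries.C 19 * (PowerSeries.X ^ 1 * pU ^ (4 * k + 5))
        - PowerSeries.C 494 * (PowerSeries.X ^ 2 * pU ^ (4 * k + 5))
        - PowerSeries.C 494 * (PowerSeries.X ^ 3 * pU ^ (4 * k + 5))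
        - PowerSeries.C 19 * (PowerSeries.X ^ 4 * pU ^ (4 * k + 5))
        + (PowerSeries.X ^ 5 * pU ^ (4 * k + 5))) := by
    rw [Lf, hf]
    rw [Polynomial.coe_add, Polynomial.coe_mul, Polynomial.coe_one, Polynomial.coe_pow, coe_X,
      add_mul, map_add, mul_assoc (PowerSeries.X ^ (k + 2)), hz, add_zero]
    congr 1
    rw [sE, sP, show (PowerSeries.C (19 : ℝ)) = 19 from rfl,
      show (PowerSeries.C (494 : ℝ)) = 494 from rfl]
    ring
  have hx : ∀ j, PowerSeries.coeff (k + 1) (PowerSeries.X ^ j * pU ^ (4 * k + 5))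
      = if j ≤ k + 1 then c (k + 1 - j) else 0 := by
    intro j; rw [PowerSeries.coeff_X_pow_mul']
  simp only [map_add, map_sub, PowerSeries.coeff_C_mul, hx] at hL
  have hc0 : PowerSeries.coeff (k + 1) (pU ^ (4 * k + 5)) = c (k + 1) := rfl
  rw [hc0, hstep, if_pos (by omega), show k + 1 - 1 = k by omega] at hL
  have hnn : ∀ j, 0 ≤ if j ≤ k + 1 then c (k + 1 - j) else 0 := by
    intro j; split_ifs
    · exact (hcpos _).le
    · exact le_rfl
  have h2 := hnn 2
  have h3 := hnn 3
  have h4 := hnn 4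
  have h5 : (if 5 ≤ k + 1 then c (k + 1 - 5) else 0) ≤ c k := by
    split_ifs
    · exact hcmono _ _ (by omega)
    · exact (hcpos _).le
  have := hcpos k
  rw [hL]
  linarith

end Gleason

end Z4Note

namespace Z4Note

section Final
open Polynomial

/-- Weight polynomial of a doubly even code, in `x = y ^ 4`. -/
noncomputable def wpoly {n : ℕ} (D : AddSubgroup (Fin n → ZMod 2)) : ℝ[X] :=
  ∑ c ∈ els D, X ^ (hWt c / 4)

lemma reflect_finsum {α : Type*} (M : ℕ) (s : Finset α) (f : α → ℝ[X]) :
    reflect M (∑ c ∈ s, f c) = ∑ c ∈ s, reflect M (f c) := by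
  classical
  induction s using Finset.induction_on with
  | empty => simp
  | insert a s ha ih => rw [Finset.sum_insert ha, Finset.sum_insert ha, reflect_add, ih]

lemma inv_wpoly {M : ℕ} {D : AddSubgroup (Fin (4 * M) → ZMod 2)} (hD : DE D) (h1 : ones ∈ D)
    (hs : dualG D = D) : Inv M (wpoly D) := by
  refine ⟨⟨?_, ?_⟩, ?_⟩
  · apply natDegree_sum_le_of_forall_le
    intro c _
    rw [natDegree_X_pow]
    have := hWt_le c
    omega
  · rw [wpoly, reflect_finsum]
    apply Finset.sum_bij (fun c _ => c + ones)
    · intro c hc; exact mem_els.2 (D.add_mem (mem_els.1 hc) h1)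
    · intro a _ b _ hab; exact add_right_cancel hab
    · intro b hb
      exact ⟨b + ones, mem_els.2 (D.add_mem (mem_els.1 hb) h1), by
        rw [add_assoc, add_self_vec, add_zero]⟩
    · intro c hc
      have h2 := hWt_le c
      have h3 := hD c (mem_els.1 hc)
      have h4 := hWt_add ones c
      rw [comm_ones, hWt_ones, add_comm ones c] at h4
      rw [reflect_monomial, revAt_le (by omega)]
      congr 1
      omega
  · intro y hy
    have hy0 : 1 + y ≠ 0 := fun h => hy (by linarith)
    have hm := macWilliams D y
    have hcard := card_mul_dual D
    rw [hs] at hm hcard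
    have hc : (els D).card = 4 ^ M := by
      have : (els D).card ^ 2 = (4 ^ M) ^ 2 := by
        rw [pow_two, hcard, show (4 : ℕ) = 2 ^ 2 by norm_num, ← pow_mul, ← pow_mul]
        congr 1; ring
      exact Nat.pow_left_injective two_ne_zero this
    rw [hc] at hm
    push_cast at hm
    rw [wpoly, eval_finsetSum, eval_finsetSum, Finset.mul_sum]
    simp only [eval_pow, eval_X]
    have e : ∀ c ∈ els D, (y ^ 4) ^ (hWt c / 4) = y ^ hWt c := by
      intro c hc
      rw [← pow_mul, Nat.mul_div_cancel' (hD c (mem_els.1 hc))]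
    rw [Finset.sum_congr rfl e, ← hm]
    refine Finset.sum_congr rfl fun c hc => ?_
    rw [← pow_mul, Nat.mul_div_cancel' (hD c (mem_els.1 hc)), div_pow]
    have h2 := hWt_le c
    rw [show (1 + y) ^ (4 * M) = (1 + y) ^ (4 * M - hWt c) * (1 + y) ^ hWt c by
      rw [← pow_add, Nat.sub_add_cancel h2]]
    field_simp

lemma wpoly_coeff {n : ℕ} (D : AddSubgroup (Fin n → ZMod 2)) (i : ℕ) :
    (wpoly D).coeff i = ∑ c ∈ els D, if i = hWt c / 4 then (1 : ℝ) else 0 := by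
  rw [wpoly, finsetSum_coeff]
  simp [coeff_X_pow]

/-- The Mallows–Sloane bound for lengths `24k+8`. -/
lemma mallows_sloane {k : ℕ} {D : AddSubgroup (Fin (4 * (6 * k + 2)) → ZMod 2)} (hD : DE D)
    (h1 : ones ∈ D) (hs : dualG D = D) : ∃ c ∈ D, c ≠ 0 ∧ hWt c ≤ 4 * k + 4 := by
  by_contra hcon
  push Not at hcon
  have hinv := inv_wpoly hD h1 hs
  have hL := Lf_eq_zero hinv
  have hneg : Lf k (wpoly D) < 0 := by
    apply Lf_neg
    · rw [wpoly_coeff, Finset.sum_eq_single 0]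
      · simp [hWt_eq_zero.2 rfl]
      · intro b hb hb0
        have := hcon b (mem_els.1 hb) hb0
        rw [if_neg (by omega)]
      · intro h; exact absurd (mem_els.2 D.zero_mem) h
    · intro i hi hik
      rw [wpoly_coeff]
      apply Finset.sum_eq_zero
      intro c hc
      rw [if_neg]
      by_cases hc0 : c = 0
      · rw [hc0, hWt_eq_zero.2 rfl]; omega
      · have := hcon c (mem_els.1 hc) hc0
        have := hD c (mem_els.1 hc)
        omega
  linarith

lemma covering {k : ℕ} {D : AddSubgroup (Fin (4 * (6 * k + 2)) → ZMod 2)} (hD : DE D)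
    (h1 : ones ∈ D) (hmin : ∀ c ∈ D, c ≠ 0 → 4 * k + 3 ≤ hWt c)
    (v : Fin (4 * (6 * k + 2)) → ZMod 2) :
    ∃ d ∈ dualG D, hWt (v + d) ≤ 4 * k + 2 := by
  have h := delsarte D ((24 * k + 8) :: (List.range (4 * k + 1)).map fun j => 4 * (k + 1 + j))
    (by
      intro a ha
      simp only [List.mem_cons, List.mem_map] at ha
      rcases ha with rfl | ⟨j, _, rfl⟩ <;> omega)
    (by
      intro c hc hc0
      have h2 := hWt_le c
      have h3 := hD c hc
      have h4 := hmin c hc hc0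
      have h5 := hWt_add ones c
      rw [comm_ones, hWt_ones] at h5
      by_cases hco : ones + c = 0
      · rw [hWt_eq_zero.2 hco] at h5
        rw [List.mem_cons]; left; omega
      · have h6 := hmin _ (D.add_mem h1 hc) hco
        rw [List.mem_cons]; right
        rw [List.mem_map]
        refine ⟨hWt c / 4 - (k + 1), ?_, ?_⟩
        · rw [List.mem_range]; omega
        · omega) v
  simpa using h

/-- Main binary statement. -/
lemma binary_main {k : ℕ} (A : AddSubgroup (Fin (4 * (6 * k + 2)) → ZMod 2)) (hA : DE A)
    (hmin : ∀ v ∈ dualG A, v ≠ 0 → 4 * k + 3 ≤ hWt v) :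
    dualG A = A ∧ (∀ c ∈ A, c ≠ 0 → 4 * k + 4 ≤ hWt c) ∧ ∃ c ∈ A, c ≠ 0 ∧ hWt c = 4 * k + 4 := by
  obtain ⟨D, hAD, hD⟩ := Set.Finite.exists_le_maximal
    (Set.toFinite {D : AddSubgroup (Fin (4 * (6 * k + 2)) → ZMod 2) | DE D}) hA
  replace hD : Maximal DE D := hD
  have h1 : ones ∈ D := ones_mem hD (by omega)
  have hs : dualG D = D := by
    have e : 4 * (6 * k + 2) = 8 * (3 * k + 1) := by ring
    clear h1 hAD hmin hA A
    revert D
    rw [e]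
    intro D hD
    exact selfDual_of_maximal hD
  have hDA : D ≤ dualG A := by
    intro x hx y hy
    exact hD.1.selfOrth hx y (hAD hy)
  have hmD : ∀ c ∈ D, c ≠ 0 → 4 * k + 3 ≤ hWt c := fun c hc => hmin c (hDA hc)
  have hAD' : dualG A = D := by
    apply le_antisymm _ hDA
    intro v hv
    obtain ⟨d, hd, hw⟩ := covering hD.1 h1 hmD v
    rw [hs] at hd
    by_cases h0 : v + d = 0
    · have : v = d := by
        have h2 : v + d + d = d := by rw [h0, zero_add]
        rwa [add_assoc, add_self_vec, add_zero] at h2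
      rwa [this]
    · have := hmin _ ((dualG A).add_mem hv (hDA hd)) h0
      omega
  have hAeq : A = D := by
    have c1 := card_mul_dual A
    have c2 := card_mul_dual D
    rw [hAD'] at c1
    rw [hs, ← c1] at c2
    have hpos : 0 < (els D).card := Finset.card_pos.2 ⟨0, mem_els.2 D.zero_mem⟩
    have hc := Nat.eq_of_mul_eq_mul_right hpos c2
    have hsub : els A ⊆ els D := fun x hx => mem_els.2 (hAD (mem_els.1 hx))
    have heq := Finset.eq_of_subset_of_card_le hsub hc.le
    ext x
    rw [← mem_els, heq, mem_els]
  have hmin4 : ∀ c ∈ A, c ≠ 0 → 4 * k + 4 ≤ hWt c := by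
    intro c hc hc0
    have h2 := hmD c (hAD hc) hc0
    have h3 := hA c hc
    omega
  refine ⟨by rw [hAD', hAeq], hmin4, ?_⟩
  obtain ⟨c, hc, hc0, hw⟩ := mallows_sloane hD.1 h1 hs
  rw [← hAeq] at hc
  exact ⟨c, hc, hc0, le_antisymm hw (hmin4 c hc hc0)⟩

/-- reduction mod 2 as a homomorphism -/
def resHom (n : ℕ) : (Fin n → ZMod 4) →+ (Fin n → ZMod 2) where
  toFun := res2
  map_zero' := by funext i; simp [res2]
  map_add' := by intro x y; funext i; simp [res2]

/-- The embedding `ZMod 2 → ZMod 4`, `a ↦ 2a`. -/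
def dbl : ZMod 2 →+ ZMod 4 where
  toFun a := 2 * (a.val : ZMod 4)
  map_zero' := by decide
  map_add' := by decide

lemma dbl_mul : ∀ (a : ZMod 2) (b : ZMod 4),
    dbl a * b = dbl (a * ZMod.castHom (by norm_num : (2:ℕ) ∣ 4) (ZMod 2) b) := by decide

lemma lee_dbl : ∀ a : ZMod 2, leeVal (dbl a) = 2 * a.val := by decide

lemma sq_res : ∀ b : ZMod 4,
    b * b = (((ZMod.castHom (by norm_num : (2:ℕ) ∣ 4) (ZMod 2) b).val : ℕ) : ZMod 4) := by decide

lemma dbl_eq_zero : ∀ a : ZMod 2, dbl a = 0 → a = 0 := by decide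

lemma z4_main {k n : ℕ} (hn : n = 4 * (6 * k + 2)) (C : Submodule (ZMod 4) (Fin n → ZMod 4))
    (hsd : SelfDualZ4 C) (hlee : 8 * k + 6 ≤ minLee (C : Set (Fin n → ZMod 4))) :
    residue (C : Set (Fin n → ZMod 4)) = dual2 (residue (C : Set (Fin n → ZMod 4))) ∧
    DoublyEven (residue (C : Set (Fin n → ZMod 4))) ∧
    minHam (residue (C : Set (Fin n → ZMod 4))) = 4 * k + 4 := by
  subst hn
  set A := C.toAddSubgroup.map (resHom _) with hAdef
  have hres : residue (C : Set (Fin (4 * (6 * k + 2)) → ZMod 4)) = (A : Set _) := rfl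
  have hdual : dual2 (A : Set (Fin (4 * (6 * k + 2)) → ZMod 2)) = (dualG A : Set _) := rfl
  have hA : DE A := by
    rintro _ ⟨x, hx, rfl⟩
    have hx' : x ∈ dualZ4 (C : Set (Fin (4 * (6 * k + 2)) → ZMod 4)) := by
      rw [← hsd]; exact hx
    have h := hx' x hx
    simp_rw [sq_res] at h
    rw [← Nat.cast_sum, ZMod.natCast_eq_zero_iff] at h
    rw [hWt_eq_sum]
    exact h
  have hmin : ∀ v ∈ dualG A, v ≠ 0 → 4 * k + 3 ≤ hWt v := by
    intro v hv hv0
    have hw : (fun i => dbl (v i)) ∈ (C : Set (Fin (4 * (6 * k + 2)) → ZMod 4)) := by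
      rw [hsd]
      intro y hy
      simp_rw [dbl_mul]
      rw [← map_sum]
      have : ip v (resHom _ y) = 0 := hv _ ⟨y, hy, rfl⟩
      have h2 : ∑ i, v i * ZMod.castHom (by norm_num : (2:ℕ) ∣ 4) (ZMod 2) (y i) = 0 := this
      rw [h2, map_zero]
    have hne : (fun i => dbl (v i)) ≠ 0 := by
      intro h
      apply hv0
      funext i
      exact dbl_eq_zero _ (congrFun h i)
    have hwt : leeWt (fun i => dbl (v i)) = 2 * hWt v := by
      rw [leeWt, hWt_eq_sum, Finset.mul_sum]
      exact Finset.sum_congr rfl fun i _ => lee_dbl _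
    have hle : minLee (C : Set (Fin (4 * (6 * k + 2)) → ZMod 4)) ≤ 2 * hWt v :=
      Nat.sInf_le ⟨_, hw, hne, hwt⟩
    omega
  obtain ⟨m1, m2, c, hc, hc0, hcw⟩ := binary_main A hA hmin
  rw [hres]
  refine ⟨?_, hA, ?_⟩
  · rw [hdual, m1]
  · apply le_antisymm
    · exact Nat.sInf_le ⟨c, hc, hc0, hcw⟩
    · refine le_csInf ⟨_, c, hc, hc0, rfl⟩ ?_
      rintro _ ⟨x, hx, hx0, rfl⟩
      exact m2 x hx hx0

end Final

end Z4Note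

open Z4Note in
/-- the residue code of a self-dual `ZMod 4`-code of length `24k+8` and
minimum Lee weight `8k+8` or `8k+6` is a binary extremal doubly even self-dual code. -/
theorem residue_of_selfdual_Z4_length24k8
    (k : ℕ) (hk : 0 < k)
    (C : Submodule (ZMod 4) (Fin (24 * k + 8) → ZMod 4))
    (hsd : SelfDualZ4 C)
    (hlee : minLee (C : Set (Fin (24 * k + 8) → ZMod 4)) = 8 * k + 8 ∨
            minLee (C : Set (Fin (24 * k + 8) → ZMod 4)) = 8 * k + 6) :
    residue (C : Set (Fin (24 * k + 8) → ZMod 4)) =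
        dual2 (residue (C : Set (Fin (24 * k + 8) → ZMod 4))) ∧
    DoublyEven (residue (C : Set (Fin (24 * k + 8) → ZMod 4))) ∧
    minHam (residue (C : Set (Fin (24 * k + 8) → ZMod 4))) = 4 * k + 4 := by
  exact z4_main (by ring) C hsd (by omega)
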